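/- arXiv:2306.08932 — 3 statements merged into one kernel-verified Lean document; each statement's English description precedes it below -/
import Mathlib

section
/- For α, β ∈ reg(T), the following are equivalent: (1) there exist γ, δ, γ', δ' ∈ reg(T) with γα = β, δβ = α, αγ' = β and βδ' = α (i.e., α and β are Green's H-related in reg(T)); (2) ker(α) = ker(β) and Xα = Xβ, i.e., α and β induce the same partition of X and have the same range. -/
universe u

/-- The semigroup `T_{E*}(X)` of maps preserving `E` in both directions. -/
def TEstar {X : Type u} (E : Setoid X) : Set (X → X) :=
  {α | ∀ x y : X, E.r x y ↔ E.r (α x) (α y)}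

/-- The `E`-class of `x`. -/
def cls {X : Type u} (E : Setoid X) (x : X) : Set X := {y | E.r x y}

/-- The regular part `reg(T)` of `T_{E*}(X)`: every `E`-class meets the range. -/
def regT {X : Type u} (E : Setoid X) : Set (X → X) :=
  {α | α ∈ TEstar E ∧ ∀ x : X, (cls E x ∩ Set.range α).Nonempty}

/-!
`reg(T)` is a regular semigroup: given `α` in it, let `ρ` send `x` to a preimage under `α` of `x`
itself if there is one, and of some point `E`-related to `x` otherwise; then `ρ ∈ reg(T)` and
`α ∘ ρ ∘ α = α`. Consequently `α ∘ (ρ ∘ β) = β` when the range of `β` is contained in that of `α`,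
and `(β ∘ ρ) ∘ α = β` when `β` is constant on the fibres of `α`. Thus divisibility in `reg(T)` is
inclusion of ranges on one side and inclusion of kernels on the other.
-/

section GeneralizedInverse

variable {X Y Z : Type*} {α : X → Y} {ρ : Y → X}

theorem comp_comp_eq_of_range_subset (hρ : α ∘ ρ ∘ α = α) {β : Z → Y}
    (h : Set.range β ⊆ Set.range α) : α ∘ ρ ∘ β = β := by
  obtain ⟨γ, rfl⟩ := Set.range_subset_range_iff_exists_comp.mp h
  exact congrArg (· ∘ γ) hρ

theorem comp_comp_eq_of_factorsThrough (hρ : α ∘ ρ ∘ α = α) {β : X → Z}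
    (h : β.FactorsThrough α) : β ∘ ρ ∘ α = β :=
  funext fun x => h (congrFun hρ x)

end GeneralizedInverse

theorem forall_apply_eq_iff_iff_factorsThrough {X Y Z : Type*} {α : X → Y} {β : X → Z} :
    (∀ x y, α x = α y ↔ β x = β y) ↔ β.FactorsThrough α ∧ α.FactorsThrough β :=
  ⟨fun h => ⟨fun x y => (h x y).mp, fun x y => (h x y).mpr⟩,
    fun ⟨hβα, hαβ⟩ x y => ⟨@hβα x y, @hαβ x y⟩⟩

section RegularPart

variable {X : Type u} {E : Setoid X} {α β : X → X}

theorem comp_mem_TEstar (hα : α ∈ TEstar E) (hβ : β ∈ TEstar E) : α ∘ β ∈ TEstar E :=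
  fun x y => (hβ x y).trans (hα (β x) (β y))

theorem comp_mem_regT (hα : α ∈ regT E) (hβ : β ∈ regT E) : α ∘ β ∈ regT E := by
  refine ⟨comp_mem_TEstar hα.1 hβ.1, fun x => ?_⟩
  obtain ⟨_, hxy, y, rfl⟩ := hα.2 x
  obtain ⟨_, hyz, z, rfl⟩ := hβ.2 y
  exact ⟨α (β z), E.trans hxy ((hα.1 y (β z)).mp hyz), z, rfl⟩

theorem mem_TEstar_of_comp_mem (hα : α ∈ TEstar E) (h : α ∘ β ∈ TEstar E) : β ∈ TEstar E :=
  fun x y => (h x y).trans (hα (β x) (β y)).symm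

theorem mem_regT_of_comp_mem (hα : α ∈ TEstar E) (h : α ∘ β ∈ regT E) : β ∈ regT E := by
  refine ⟨mem_TEstar_of_comp_mem hα h.1, fun x => ?_⟩
  obtain ⟨_, hxy, y, rfl⟩ := h.2 (α x)
  exact ⟨β y, (hα x (β y)).mpr hxy, y, rfl⟩

theorem mem_regT_of_forall_rel (h : ∀ x, E.r x (α x)) : α ∈ regT E :=
  ⟨fun x y =>
    ⟨fun hxy => E.trans (E.symm (h x)) (E.trans hxy (h y)),
      fun hxy => E.trans (h x) (E.trans hxy (E.symm (h y)))⟩,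
    fun x => ⟨α x, h x, x, rfl⟩⟩

theorem exists_mem_regT_comp_comp_eq_self (hα : α ∈ regT E) :
    ∃ ρ ∈ regT E, α ∘ ρ ∘ α = α := by
  have exists_preimage (x : X) : ∃ y, E.r x (α y) ∧ (x ∈ Set.range α → α y = x) := by
    by_cases hx : x ∈ Set.range α
    · obtain ⟨y, rfl⟩ := hx
      exact ⟨y, E.refl _, fun _ => rfl⟩
    · obtain ⟨_, hxy, y, rfl⟩ := hα.2 x
      exact ⟨y, hxy, fun h => absurd h hx⟩
  choose ρ hrel hinv using exists_preimage
  exact ⟨ρ, mem_regT_of_comp_mem hα.1 (mem_regT_of_forall_rel hrel),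
    funext fun x => hinv (α x) ⟨x, rfl⟩⟩

theorem exists_regT_comp_eq_iff_range_subset (hα : α ∈ regT E) (hβ : β ∈ regT E) :
    (∃ γ ∈ regT E, α ∘ γ = β) ↔ Set.range β ⊆ Set.range α := by
  constructor
  · rintro ⟨γ, -, rfl⟩
    exact Set.range_comp_subset_range γ α
  · intro h
    obtain ⟨ρ, hρ, hαρ⟩ := exists_mem_regT_comp_comp_eq_self hα
    exact ⟨ρ ∘ β, comp_mem_regT hρ hβ, comp_comp_eq_of_range_subset hαρ h⟩

theorem exists_regT_comp_eq_iff_factorsThrough (hα : α ∈ regT E) (hβ : β ∈ regT E) :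
    (∃ γ ∈ regT E, γ ∘ α = β) ↔ β.FactorsThrough α := by
  constructor
  · rintro ⟨γ, -, rfl⟩ x y hxy
    exact congrArg γ hxy
  · intro h
    obtain ⟨ρ, hρ, hαρ⟩ := exists_mem_regT_comp_comp_eq_self hα
    exact ⟨β ∘ ρ, comp_mem_regT hβ hρ, comp_comp_eq_of_factorsThrough hαρ h⟩

theorem exists_regT_comp_eq_comp_eq_iff_range_eq (hα : α ∈ regT E) (hβ : β ∈ regT E) :
    (∃ γ ∈ regT E, ∃ δ ∈ regT E, α ∘ γ = β ∧ β ∘ δ = α) ↔ Set.range α = Set.range β := by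
  rw [Set.Subset.antisymm_iff, ← exists_regT_comp_eq_iff_range_subset hβ hα,
    ← exists_regT_comp_eq_iff_range_subset hα hβ]
  exact ⟨fun ⟨γ, hγ, δ, hδ, hαγ, hβδ⟩ => ⟨⟨δ, hδ, hβδ⟩, γ, hγ, hαγ⟩,
    fun ⟨⟨δ, hδ, hβδ⟩, γ, hγ, hαγ⟩ => ⟨γ, hγ, δ, hδ, hαγ, hβδ⟩⟩

theorem exists_regT_comp_eq_comp_eq_iff_ker_eq (hα : α ∈ regT E) (hβ : β ∈ regT E) :
    (∃ γ ∈ regT E, ∃ δ ∈ regT E, γ ∘ α = β ∧ δ ∘ β = α) ↔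
      ∀ x y : X, α x = α y ↔ β x = β y := by
  rw [forall_apply_eq_iff_iff_factorsThrough, ← exists_regT_comp_eq_iff_factorsThrough hα hβ,
    ← exists_regT_comp_eq_iff_factorsThrough hβ hα]
  exact ⟨fun ⟨γ, hγ, δ, hδ, hγα, hδβ⟩ => ⟨⟨γ, hγ, hγα⟩, δ, hδ, hδβ⟩,
    fun ⟨⟨γ, hγ, hγα⟩, δ, hδ, hδβ⟩ => ⟨γ, hγ, δ, hδ, hγα, hδβ⟩⟩

end RegularPart

/-- Green's `H`-relation on `reg(T)`: `α H β` iff `ker α = ker β` and `Xα = Xβ`. -/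
theorem stmt4 {X : Type u} [Nonempty X] (E : Setoid X) (α β : X → X)
    (hα : α ∈ regT E) (hβ : β ∈ regT E) :
    ((∃ γ ∈ regT E, ∃ δ ∈ regT E, α ∘ γ = β ∧ β ∘ δ = α) ∧
     (∃ γ' ∈ regT E, ∃ δ' ∈ regT E, γ' ∘ α = β ∧ δ' ∘ β = α)) ↔
      ((∀ x y : X, α x = α y ↔ β x = β y) ∧ Set.range α = Set.range β) := by
  rw [exists_regT_comp_eq_comp_eq_iff_range_eq hα hβ,
    exists_regT_comp_eq_comp_eq_iff_ker_eq hα hβ, and_comm]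
end

section
/- Let s be a function assigning to each E-class A a cardinal s(A) with 1 ≤ s(A) ≤ |A|, and let r(A) = s(A)⁺ (the successor cardinal). Then Q(r) is a principal ideal of reg(T): there exists γ ∈ Q(r) such that Q(r) = {λγμ : λ, μ ∈ reg(T)} (as functions, Q(r) = {μ ∘ γ ∘ λ : λ, μ ∈ reg(T)}). -/
universe u

/-- The `E`-class indexed by an element of the quotient `X/E`. -/
def clsQ {X : Type u} (E : Setoid X) (A : Quotient E) : Set X :=
  {x | Quotient.mk E x = A}

/-- The ideal `Q(r)` of `reg(T)`. -/
def Qr {X : Type u} (E : Setoid X) (r : Quotient E → Cardinal.{u}) : Set (X → X) :=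
  {α | α ∈ regT E ∧ ∃ σ : Quotient E ≃ Quotient E,
    ∀ A : Quotient E, Cardinal.mk ↥(α '' clsQ E A) < r (σ A)}

/-!
An element `α` of `reg(T)` permutes the `E`-classes. Hence, for `γ` in `reg(T)`, an element `α` of
`reg(T)` has the form `m ∘ γ ∘ l` with `l, m` in `reg(T)` if and only if some permutation `σ` of
the classes satisfies `|Aα| ≤ |σ(A)γ|` for every class `A`: the map `l` sends `A` into `σ(A)`, and
`m` sends `σ(A)γ` onto `Aα`. Since `κ < s⁺` means `κ ≤ s`, this condition defines `Q(r)` as soon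
as `|Aγ| = s(A)` for every class `A`, and such a `γ` exists because `1 ≤ s(A) ≤ |A|`.
-/

theorem exists_surjOn_of_mk_le {α β : Type u} {S : Set α} {T : Set β} (hS : S.Nonempty)
    (h : Cardinal.mk S ≤ Cardinal.mk T) : ∃ g : β → α, (∀ b, g b ∈ S) ∧ Set.SurjOn g T S := by
  have : Nonempty S := hS.to_subtype
  obtain ⟨i⟩ := Cardinal.le_def S T |>.1 h
  let j : S → β := fun a => i a
  have hj : Function.Injective j := Subtype.val_injective.comp i.injective
  exact ⟨fun b => (Function.invFun j b : S), fun b => (Function.invFun j b).2,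
    fun a ha => ⟨j ⟨a, ha⟩, (i ⟨a, ha⟩).2, congrArg Subtype.val (Function.leftInverse_invFun hj _)⟩⟩

section InducedPermutation

variable {X : Type u} {E : Setoid X} {α β : X → X}

theorem clsQ_nonempty (A : Quotient E) : (clsQ E A).Nonempty :=
  Quotient.exists_rep A

/-- The map `α` descends to the permutation `τ` of the set `X/E` of classes; the elements of
`reg(T)` are exactly the maps that descend to some permutation. -/
def Induces (E : Setoid X) (τ : Equiv.Perm (Quotient E)) (α : X → X) : Prop :=
  ∀ x, Quotient.mk E (α x) = τ (Quotient.mk E x)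

theorem Induces.comp {σ τ : Equiv.Perm (Quotient E)} (hβ : Induces E τ β) (hα : Induces E σ α) :
    Induces E (τ * σ) (β ∘ α) := fun x =>
  (hβ (α x)).trans (congrArg τ (hα x))

theorem Induces.mapsTo_clsQ {τ : Equiv.Perm (Quotient E)} (hα : Induces E τ α) (A : Quotient E) :
    Set.MapsTo α (clsQ E A) (clsQ E (τ A)) := fun x hx =>
  (hα x).trans (congrArg τ hx)

theorem Induces.mem_regT {τ : Equiv.Perm (Quotient E)} (hα : Induces E τ α) : α ∈ regT E := by
  refine ⟨fun x y => ?_, fun x => ?_⟩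
  · calc E.r x y ↔ Quotient.mk E x = Quotient.mk E y := Quotient.eq.symm
      _ ↔ Quotient.mk E (α x) = Quotient.mk E (α y) := by rw [hα, hα, τ.injective.eq_iff]
      _ ↔ E.r (α x) (α y) := Quotient.eq
  · obtain ⟨y, hy⟩ := Quotient.exists_rep (τ.symm (Quotient.mk E x))
    have hxy : Quotient.mk E x = Quotient.mk E (α y) := by rw [hα, hy, Equiv.apply_symm_apply]
    exact ⟨α y, Quotient.exact hxy, y, rfl⟩

theorem exists_induces_of_mem_regT (hα : α ∈ regT E) : ∃ τ, Induces E τ α := by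
  obtain ⟨hE, hrange⟩ := hα
  let t : Quotient E → Quotient E := Quotient.map α fun x y => (hE x y).1
  have injective_t : Function.Injective t := by
    rintro ⟨x⟩ ⟨y⟩ h
    exact Quotient.sound ((hE x y).2 (Quotient.exact h))
  have surjective_t : Function.Surjective t := by
    rintro ⟨y⟩
    obtain ⟨_, hy, x, rfl⟩ := hrange y
    exact ⟨Quotient.mk E x, Quotient.sound (E.symm hy)⟩
  exact ⟨Equiv.ofBijective t ⟨injective_t, surjective_t⟩, fun _ => rfl⟩

end InducedPermutation

section Factorization

variable {X : Type u} {E : Setoid X} {α γ : X → X}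

theorem mk_image_comp_comp_clsQ_le {σ : Equiv.Perm (Quotient E)} {l m : X → X}
    (hl : Induces E σ l) (A : Quotient E) :
    Cardinal.mk ((m ∘ γ ∘ l) '' clsQ E A) ≤ Cardinal.mk (γ '' clsQ E (σ A)) := by
  have hsub : (m ∘ γ ∘ l) '' clsQ E A ⊆ m '' (γ '' clsQ E (σ A)) := by
    rw [Set.image_comp, Set.image_comp]
    exact Set.image_mono (Set.image_mono (hl.mapsTo_clsQ A).image_subset)
  exact (Cardinal.mk_le_mk_of_subset hsub).trans Cardinal.mk_image_le

theorem exists_eq_comp_comp_of_mk_image_clsQ_le (hα : α ∈ regT E) (hγ : γ ∈ regT E)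
    {σ : Equiv.Perm (Quotient E)}
    (h : ∀ A, Cardinal.mk (α '' clsQ E A) ≤ Cardinal.mk (γ '' clsQ E (σ A))) :
    ∃ l ∈ regT E, ∃ m ∈ regT E, α = m ∘ γ ∘ l := by
  obtain ⟨τ, hτ⟩ := exists_induces_of_mem_regT hα
  obtain ⟨ρ, hρ⟩ := exists_induces_of_mem_regT hγ
  choose g hg_mem hg_surj using fun A =>
    exists_surjOn_of_mk_le ((clsQ_nonempty A).image α) (h A)
  have exists_lift (x : X) :
      ∃ y ∈ clsQ E (σ (Quotient.mk E x)), g (Quotient.mk E x) (γ y) = α x := by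
    obtain ⟨_, ⟨y, hy, rfl⟩, hyx⟩ := hg_surj (Quotient.mk E x) ⟨x, rfl, rfl⟩
    exact ⟨y, hy, hyx⟩
  choose l hl hgl using exists_lift
  have induces_l : Induces E σ l := hl
  let m : X → X := fun z => g ((ρ * σ)⁻¹ (Quotient.mk E z)) z
  have induces_m : Induces E (τ * (ρ * σ)⁻¹) m := fun z =>
    (hτ.mapsTo_clsQ _).image_subset (hg_mem _ z)
  refine ⟨l, induces_l.mem_regT, m, induces_m.mem_regT, funext fun x => ?_⟩
  have class_eq : (ρ * σ)⁻¹ (Quotient.mk E (γ (l x))) = Quotient.mk E x :=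
    Equiv.Perm.inv_eq_iff_eq.2 (hρ.comp induces_l x)
  calc α x = g (Quotient.mk E x) (γ (l x)) := (hgl x).symm
    _ = m (γ (l x)) := by simp only [m, class_eq]

theorem exists_eq_comp_comp_iff (hγ : γ ∈ regT E) :
    (∃ l ∈ regT E, ∃ m ∈ regT E, α = m ∘ γ ∘ l) ↔
      α ∈ regT E ∧ ∃ σ : Equiv.Perm (Quotient E),
        ∀ A, Cardinal.mk (α '' clsQ E A) ≤ Cardinal.mk (γ '' clsQ E (σ A)) := by
  constructor
  · rintro ⟨l, hl, m, hm, rfl⟩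
    obtain ⟨σ, hσ⟩ := exists_induces_of_mem_regT hl
    obtain ⟨ρ, hρ⟩ := exists_induces_of_mem_regT hγ
    obtain ⟨τ, hτ⟩ := exists_induces_of_mem_regT hm
    exact ⟨(hτ.comp (hρ.comp hσ)).mem_regT, σ, mk_image_comp_comp_clsQ_le hσ⟩
  · rintro ⟨hα, σ, hσ⟩
    exact exists_eq_comp_comp_of_mk_image_clsQ_le hα hγ hσ

end Factorization

theorem exists_mem_regT_mk_image_clsQ_eq {X : Type u} {E : Setoid X} {s : Quotient E → Cardinal.{u}}
    (hs : ∀ A, 1 ≤ s A ∧ s A ≤ Cardinal.mk (clsQ E A)) :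
    ∃ γ ∈ regT E, ∀ A, Cardinal.mk (γ '' clsQ E A) = s A := by
  choose S hS_sub hS_card using fun A => Cardinal.le_mk_iff_exists_subset.1 (hs A).2
  have hS_nonempty (A : Quotient E) : (S A).Nonempty := by
    rw [← Set.nonempty_coe_sort, ← Cardinal.mk_ne_zero_iff, hS_card, ← Cardinal.one_le_iff_ne_zero]
    exact (hs A).1
  choose g hg_mem hg_surj using fun A =>
    exists_surjOn_of_mk_le (hS_nonempty A) (Cardinal.mk_le_mk_of_subset (hS_sub A))
  let γ : X → X := fun x => g (Quotient.mk E x) x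
  have induces_γ : Induces E 1 γ := fun x => hS_sub _ (hg_mem _ x)
  have image_γ (A : Quotient E) : γ '' clsQ E A = S A := by
    have eqOn : Set.EqOn γ (g A) (clsQ E A) := fun x hx => congrArg (g · x) hx
    rw [eqOn.image_eq]
    exact (hg_surj A).image_eq_of_mapsTo fun x _ => hg_mem A x
  exact ⟨γ, induces_γ.mem_regT, fun A => by rw [image_γ, hS_card]⟩

theorem mem_Qr_succ_iff {X : Type u} {E : Setoid X} {s : Quotient E → Cardinal.{u}} {α : X → X} :
    α ∈ Qr E (fun A => Order.succ (s A)) ↔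
      α ∈ regT E ∧ ∃ σ : Equiv.Perm (Quotient E),
        ∀ A, Cardinal.mk (α '' clsQ E A) ≤ s (σ A) := by
  simp only [Qr, Set.mem_ofPred_eq, Order.lt_succ_iff]

/-- If `r A = s A ⁺` with `1 ≤ s A ≤ |A|`, then `Q(r)` is a principal ideal of `reg(T)`. -/
theorem stmt10 {X : Type u} [Nonempty X] (E : Setoid X)
    (s : Quotient E → Cardinal.{u})
    (hs : ∀ A : Quotient E, 1 ≤ s A ∧ s A ≤ Cardinal.mk ↥(clsQ E A)) :
    ∃ γ ∈ Qr E (fun A => Order.succ (s A)),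
      Qr E (fun A => Order.succ (s A)) =
        {f | ∃ l ∈ regT E, ∃ m ∈ regT E, f = m ∘ γ ∘ l} := by
  obtain ⟨γ, hγ, hγs⟩ := exists_mem_regT_mk_image_clsQ_eq hs
  have mem_Qr_iff (α : X → X) : α ∈ Qr E (fun A => Order.succ (s A)) ↔
      ∃ l ∈ regT E, ∃ m ∈ regT E, α = m ∘ γ ∘ l := by
    simp only [mem_Qr_succ_iff, exists_eq_comp_comp_iff hγ, hγs]
  exact ⟨γ, mem_Qr_succ_iff.2 ⟨hγ, 1, fun A => (hγs A).le⟩, Set.ext mem_Qr_iff⟩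
end

section
/- For α ∈ Q(2), α is idempotent (αα = α, i.e., α(α(x)) = α(x) for all x ∈ X) if and only if Aα ⊆ A for every E-class A (equivalently, (x, α(x)) ∈ E for every x ∈ X). -/
universe u

/-- The kernel `Q(2)` of `reg(T)`: every `E`-class has a one-point image. -/
def Q2 {X : Type u} (E : Setoid X) : Set (X → X) :=
  {α | α ∈ regT E ∧ ∀ x : X, ∃ y : X, α '' cls E x = {y}}

/- The conditions defining `Q(2)` make `E` the kernel of `α`; idempotence says exactly that `x` and
`α x` always have the same image under `α`, i.e. that `α` moves each point within its `E`-class. -/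

section

variable {X : Type u} {E : Setoid X} {α : X → X}

theorem image_cls_subset_iff_rel :
    (∀ a : X, α '' cls E a ⊆ cls E a) ↔ ∀ x : X, E x (α x) := by
  constructor
  · intro h x
    exact h x (Set.mem_image_of_mem α (E.refl x))
  · rintro h a _ ⟨b, hab, rfl⟩
    exact E.trans hab (h b)

theorem comp_self_eq_self_iff_ker_rel :
    α ∘ α = α ↔ ∀ x : X, Setoid.ker α x (α x) :=
  funext_iff.trans (forall_congr' fun _ => eq_comm)

theorem ker_le_of_mem_TEstar (hα : α ∈ TEstar E) : Setoid.ker α ≤ E := by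
  intro x y (hxy : α x = α y)
  have hrel : E (α x) (α y) := hxy ▸ E.refl (α x)
  exact (hα x y).2 hrel

theorem le_ker_of_image_cls_subsingleton {Y : Type*} {f : X → Y}
    (h : ∀ x : X, (f '' cls E x).Subsingleton) : E ≤ Setoid.ker f := by
  intro x y hxy
  exact h x (Set.mem_image_of_mem f (E.refl x)) (Set.mem_image_of_mem f hxy)

theorem ker_eq_of_mem_Q2 (hα : α ∈ Q2 E) : Setoid.ker α = E := by
  obtain ⟨⟨hE, _⟩, hsingleton⟩ := hα
  refine le_antisymm (ker_le_of_mem_TEstar hE) (le_ker_of_image_cls_subsingleton fun x => ?_)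
  obtain ⟨y, hy⟩ := hsingleton x
  exact hy ▸ Set.subsingleton_singleton

theorem stmt17_general (hker : Setoid.ker α = E) :
    α ∘ α = α ↔ ∀ a : X, α '' cls E a ⊆ cls E a := by
  rw [comp_self_eq_self_iff_ker_rel, hker, image_cls_subset_iff_rel]

end

/-- `α ∈ Q(2)` is idempotent iff `Aα ⊆ A` for every `E`-class `A`. -/
theorem stmt17 {X : Type u} [Nonempty X] (E : Setoid X) (α : X → X)
    (hα : α ∈ Q2 E) :
    α ∘ α = α ↔ ∀ a : X, α '' cls E a ⊆ cls E a :=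
  stmt17_general (ker_eq_of_mem_Q2 hα)
end
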